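/- Let A be a partial H-module algebra and 𝔰 ⊊ A an H-stable ideal. The following are equivalent: (1) 𝔰 is H-semiprime (I² ⊆ 𝔰 ⇒ I ⊆ 𝔰 for H-stable ideals I); (2) 𝔰 is an intersection of H-prime ideals; (3) 𝔰 = √_H(𝔰). -/

import Mathlib

open TensorProduct

noncomputable section

variable (k : Type*) [Field k]

/-- The "Sweedler sum" `h ↦ Σ f(h₁) * g(h₂)`. -/
def sweedler {H A : Type*} [Ring H] [HopfAlgebra k H]
    [Ring A] [Algebra k A] (f g : H →ₗ[k] A) : H →ₗ[k] A :=
  (LinearMap.mul' k A) ∘ₗ (TensorProduct.map f g) ∘ₗ Coalgebra.comul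

/-- A (left) partial `H`-module algebra structure on a unital algebra `A`:
`1_H · a = a`, `h · (ab) = Σ (h₁·a)(h₂·b)` and `h·(g·b) = Σ (h₁·1)((h₂ g)·b)`. -/
structure PartialModuleAlgebra (H A : Type*) [Ring H] [HopfAlgebra k H]
    [Ring A] [Algebra k A] where
  act : H →ₗ[k] A →ₗ[k] A
  one_act : ∀ a : A, act 1 a = a
  act_mul : ∀ (h : H) (a b : A),
    act h (a * b) = sweedler k (act.flip a) (act.flip b) h
  act_act : ∀ (h g : H) (b : A),
    act h (act g b) =
      sweedler k (act.flip 1) ((act.flip b) ∘ₗ LinearMap.mulRight k g) h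

variable {H A : Type*} [Ring H] [HopfAlgebra k H] [Ring A] [Algebra k A]

/-- A (two-sided) ideal of `A`, encoded as a `k`-submodule closed under multiplication
by elements of `A` on both sides. -/
def IsIdeal (I : Submodule k A) : Prop :=
  ∀ a ∈ I, ∀ b : A, a * b ∈ I ∧ b * a ∈ I

/-- An `H`-stable subspace: `H · I ⊆ I`. -/
def Hstable (ξ : PartialModuleAlgebra k H A) (I : Submodule k A) : Prop :=
  ∀ (h : H), ∀ x ∈ I, ξ.act h x ∈ I

/-- `(I : H) = {x ∈ I | h · x ∈ I for all h ∈ H}`. -/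
def colonH (ξ : PartialModuleAlgebra k H A) (I : Submodule k A) : Submodule k A :=
  I ⊓ ⨅ h : H, Submodule.comap (ξ.act h) I

/-- The product of two ideals of `A`. -/
def idealProd (I J : Submodule k A) : Submodule k A :=
  Submodule.span k {z | ∃ a ∈ I, ∃ b ∈ J, z = a * b}

/-- An `H`-prime ideal: a proper `H`-stable ideal `𝔭` such that for all `H`-stable ideals
`I, J`, `IJ ⊆ 𝔭` implies `I ⊆ 𝔭` or `J ⊆ 𝔭`. -/
def IsHPrime (ξ : PartialModuleAlgebra k H A) (p : Submodule k A) : Prop :=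
  IsIdeal k p ∧ Hstable k ξ p ∧ p ≠ ⊤ ∧
    ∀ I J : Submodule k A, IsIdeal k I → Hstable k ξ I → IsIdeal k J → Hstable k ξ J →
      idealProd k I J ≤ p → I ≤ p ∨ J ≤ p

/-- An `H`-semiprime ideal: a proper `H`-stable ideal `𝔰` such that `I² ⊆ 𝔰` implies
`I ⊆ 𝔰` for every `H`-stable ideal `I`. -/
def IsHSemiprime (ξ : PartialModuleAlgebra k H A) (s : Submodule k A) : Prop :=
  IsIdeal k s ∧ Hstable k ξ s ∧ s ≠ ⊤ ∧
    ∀ I : Submodule k A, IsIdeal k I → Hstable k ξ I → idealProd k I I ≤ s → I ≤ s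

/-- The subspace `A(H·x)A(H·y)`, spanned by the products `a (h·x) b (g·y)`. -/
def spanAxAy (ξ : PartialModuleAlgebra k H A) (x y : A) : Submodule k A :=
  Submodule.span k {w | ∃ (a : A) (h : H) (b : A) (g : H), w = a * ξ.act h x * b * ξ.act g y}

/-- An `Hm`-system: a nonempty `M ⊆ A` such that `A(H·x)A(H·y) ∩ M ≠ ∅` for `x, y ∈ M`. -/
def HmSystem (ξ : PartialModuleAlgebra k H A) (M : Set A) : Prop :=
  M.Nonempty ∧ ∀ x ∈ M, ∀ y ∈ M, ∃ z ∈ M, z ∈ spanAxAy k ξ x y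

/-- An `Hn`-system: a nonempty `N ⊆ A` such that `A(H·x)A(H·x) ∩ N ≠ ∅` for `x ∈ N`. -/
def HnSystem (ξ : PartialModuleAlgebra k H A) (N : Set A) : Prop :=
  N.Nonempty ∧ ∀ x ∈ N, ∃ z ∈ N, z ∈ spanAxAy k ξ x x

/-- The `H`-radical `√_H(I)` of an `H`-stable ideal `I`:
`{x | every Hm-system containing x meets I}`. -/
def Hradical (ξ : PartialModuleAlgebra k H A) (I : Submodule k A) : Set A :=
  {x : A | ∀ M : Set A, HmSystem k ξ M → x ∈ M → (M ∩ (I : Set A)).Nonempty}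

/-!
The complement of an `H`-prime ideal is an `Hm`-system, and by Zorn's lemma an `H`-stable ideal
maximal among those avoiding a given `Hm`-system is `H`-prime. Hence `√_H(𝔰)` is the intersection
of the `H`-prime ideals containing `𝔰`, and a proper intersection of `H`-prime ideals is
`H`-semiprime. Conversely the complement of an `H`-semiprime ideal is an `Hn`-system. Starting
from `x` in an `Hn`-system, repeatedly choosing `xₙ₊₁ ∈ A(H·xₙ)A(H·xₙ)` inside it makes the left
ideals `A(H·xₙ)` decrease, so the `xₙ` form an `Hm`-system through `x`; therefore `√_H(𝔰) ⊆ 𝔰`.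
-/

section

variable {k} {ξ : PartialModuleAlgebra k H A} {I J p s : Submodule k A} {x y : A}

theorem isIdeal_iff_mul_top_le_and_top_mul_le : IsIdeal k I ↔ I * ⊤ ≤ I ∧ ⊤ * I ≤ I :=
  ⟨fun h => ⟨Submodule.mul_le.2 fun _ ha b _ => (h _ ha b).1,
      Submodule.mul_le.2 fun b _ _ ha => (h _ ha b).2⟩,
    fun h _ ha _ => ⟨h.1 (Submodule.mul_mem_mul ha Submodule.mem_top),
      h.2 (Submodule.mul_mem_mul Submodule.mem_top ha)⟩⟩

theorem IsIdeal.mul_top_le (hI : IsIdeal k I) : I * ⊤ ≤ I :=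
  (isIdeal_iff_mul_top_le_and_top_mul_le.1 hI).1

theorem IsIdeal.top_mul_le (hI : IsIdeal k I) : ⊤ * I ≤ I :=
  (isIdeal_iff_mul_top_le_and_top_mul_le.1 hI).2

protected theorem IsIdeal.sSup {c : Set (Submodule k A)} (hc : ∀ I ∈ c, IsIdeal k I) :
    IsIdeal k (sSup c) := by
  intro a ha b
  have mulRight_le : sSup c ≤ (sSup c).comap (LinearMap.mulRight k b) :=
    sSup_le fun I hI _ hx => le_sSup hI (hc I hI _ hx b).1
  have mulLeft_le : sSup c ≤ (sSup c).comap (LinearMap.mulLeft k b) :=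
    sSup_le fun I hI _ hx => le_sSup hI (hc I hI _ hx b).2
  exact ⟨mulRight_le ha, mulLeft_le ha⟩

protected theorem IsIdeal.sup (hI : IsIdeal k I) (hJ : IsIdeal k J) : IsIdeal k (I ⊔ J) := by
  rw [← sSup_pair]
  exact .sSup (by simp [hI, hJ])

protected theorem IsIdeal.sInf {c : Set (Submodule k A)} (hc : ∀ I ∈ c, IsIdeal k I) :
    IsIdeal k (sInf c) := by
  simp only [IsIdeal, Submodule.mem_sInf]
  exact fun a ha b => ⟨fun I hI => (hc I hI a (ha I hI) b).1, fun I hI => (hc I hI a (ha I hI) b).2⟩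

theorem idealProd_eq_mul (I J : Submodule k A) : idealProd k I J = I * J := by
  rw [idealProd, Submodule.mul_eq_span_mul_set]
  congr 1
  ext z
  simp [Set.mem_mul, eq_comm]

theorem sweedler_mem {f g : H →ₗ[k] A} (hI : ∀ u v, f u * g v ∈ I) (h : H) :
    sweedler k f g h ∈ I := by
  rw [sweedler, LinearMap.comp_apply, LinearMap.comp_apply]
  induction (Coalgebra.comul h : H ⊗[k] H) using TensorProduct.induction_on with
  | zero => simp
  | tmul u v => simpa using hI u v
  | add t t' ht ht' => simpa only [map_add] using I.add_mem ht ht'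

protected theorem Hstable.top : Hstable k ξ ⊤ := fun _ _ _ => Submodule.mem_top

protected theorem Hstable.mul (hI : Hstable k ξ I) (hJ : Hstable k ξ J) : Hstable k ξ (I * J) := by
  intro h
  suffices I * J ≤ (I * J).comap (ξ.act h) from this
  refine Submodule.mul_le.2 fun a ha b hb => ?_
  rw [Submodule.mem_comap, ξ.act_mul]
  exact sweedler_mem (fun u v => Submodule.mul_mem_mul (hI u a ha) (hJ v b hb)) h

protected theorem Hstable.sSup {c : Set (Submodule k A)} (hc : ∀ I ∈ c, Hstable k ξ I) :
    Hstable k ξ (sSup c) := by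
  intro h
  suffices sSup c ≤ (sSup c).comap (ξ.act h) from this
  exact sSup_le fun I hI x hx => le_sSup hI (hc I hI h x hx)

protected theorem Hstable.sup (hI : Hstable k ξ I) (hJ : Hstable k ξ J) : Hstable k ξ (I ⊔ J) := by
  rw [← sSup_pair]
  exact .sSup (by simp [hI, hJ])

protected theorem Hstable.sInf {c : Set (Submodule k A)} (hc : ∀ I ∈ c, Hstable k ξ I) :
    Hstable k ξ (sInf c) := by
  simp only [Hstable, Submodule.mem_sInf]
  exact fun h x hx I hI => hc I hI h x (hx I hI)

namespace PartialModuleAlgebra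

/-- The left ideal `A(H·x)`, the least `H`-stable left ideal containing `x`. Left ideals are
encoded, like ideals, as `k`-submodules. -/
def orbitLeftIdeal (ξ : PartialModuleAlgebra k H A) (x : A) : Submodule k A :=
  ⊤ * LinearMap.range (ξ.act.flip x)

/-- The two-sided ideal `A(H·x)A`, the least `H`-stable ideal containing `x`. -/
def orbitIdeal (ξ : PartialModuleAlgebra k H A) (x : A) : Submodule k A :=
  ξ.orbitLeftIdeal x * ⊤

theorem top_mul_orbitLeftIdeal_le (ξ : PartialModuleAlgebra k H A) (x : A) :
    ⊤ * ξ.orbitLeftIdeal x ≤ ξ.orbitLeftIdeal x := by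
  rw [orbitLeftIdeal, ← mul_assoc]
  gcongr
  exact le_top

theorem mul_act_mem_orbitLeftIdeal (ξ : PartialModuleAlgebra k H A) (a : A) (h : H) (x : A) :
    a * ξ.act h x ∈ ξ.orbitLeftIdeal x :=
  Submodule.mul_mem_mul Submodule.mem_top ⟨h, rfl⟩

theorem mem_orbitLeftIdeal_self (ξ : PartialModuleAlgebra k H A) (x : A) :
    x ∈ ξ.orbitLeftIdeal x := by
  simpa only [one_mul, ξ.one_act] using ξ.mul_act_mem_orbitLeftIdeal 1 1 x

theorem act_act_mem_orbitLeftIdeal (ξ : PartialModuleAlgebra k H A) (h g : H) (x : A) :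
    ξ.act h (ξ.act g x) ∈ ξ.orbitLeftIdeal x := by
  rw [ξ.act_act]
  exact sweedler_mem (fun u v => ξ.mul_act_mem_orbitLeftIdeal (ξ.act u 1) (v * g) x) h

theorem hstable_orbitLeftIdeal (ξ : PartialModuleAlgebra k H A) (x : A) :
    Hstable k ξ (ξ.orbitLeftIdeal x) := by
  intro h
  suffices ξ.orbitLeftIdeal x ≤ (ξ.orbitLeftIdeal x).comap (ξ.act h) from this
  refine Submodule.mul_le.2 ?_
  rintro a - _ ⟨g, rfl⟩
  rw [Submodule.mem_comap, ξ.act_mul]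
  exact sweedler_mem (fun u v => ξ.top_mul_orbitLeftIdeal_le x
    (Submodule.mul_mem_mul Submodule.mem_top (ξ.act_act_mem_orbitLeftIdeal v g x))) h

theorem orbitLeftIdeal_le (hI : ⊤ * I ≤ I) (hIs : Hstable k ξ I) (hx : x ∈ I) :
    ξ.orbitLeftIdeal x ≤ I := by
  refine Submodule.mul_le.2 ?_
  rintro a - _ ⟨h, rfl⟩
  exact hI (Submodule.mul_mem_mul Submodule.mem_top (hIs h x hx))

theorem isIdeal_orbitIdeal (ξ : PartialModuleAlgebra k H A) (x : A) :
    IsIdeal k (ξ.orbitIdeal x) := by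
  refine isIdeal_iff_mul_top_le_and_top_mul_le.2 ⟨?_, ?_⟩
  · rw [orbitIdeal, mul_assoc]
    gcongr
    exact le_top
  · rw [orbitIdeal, ← mul_assoc]
    gcongr
    exact ξ.top_mul_orbitLeftIdeal_le x

theorem hstable_orbitIdeal (ξ : PartialModuleAlgebra k H A) (x : A) :
    Hstable k ξ (ξ.orbitIdeal x) :=
  (ξ.hstable_orbitLeftIdeal x).mul .top

theorem mem_orbitIdeal_self (ξ : PartialModuleAlgebra k H A) (x : A) : x ∈ ξ.orbitIdeal x := by
  simpa only [orbitIdeal, mul_one] using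
    Submodule.mul_mem_mul (ξ.mem_orbitLeftIdeal_self x) (Submodule.mem_top (x := (1 : A)))

end PartialModuleAlgebra

theorem spanAxAy_eq_mul (ξ : PartialModuleAlgebra k H A) (x y : A) :
    spanAxAy k ξ x y = ξ.orbitLeftIdeal x * ξ.orbitLeftIdeal y := by
  simp only [spanAxAy, PartialModuleAlgebra.orbitLeftIdeal, Submodule.mul_eq_span_mul_set ⊤,
    Submodule.span_mul_span]
  congr 1
  ext w
  simp [Set.mem_mul, mul_assoc, eq_comm]

theorem idealProd_orbitIdeal_le (hp : IsIdeal k p) (hxy : spanAxAy k ξ x y ≤ p) :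
    idealProd k (ξ.orbitIdeal x) (ξ.orbitIdeal y) ≤ p := by
  rw [spanAxAy_eq_mul] at hxy
  calc
    idealProd k (ξ.orbitIdeal x) (ξ.orbitIdeal y)
    _ = ξ.orbitLeftIdeal x * (⊤ * ξ.orbitLeftIdeal y) * ⊤ := by
      simp only [idealProd_eq_mul, PartialModuleAlgebra.orbitIdeal, mul_assoc]
    _ ≤ ξ.orbitLeftIdeal x * ξ.orbitLeftIdeal y * ⊤ := by
      gcongr
      exact ξ.top_mul_orbitLeftIdeal_le y
    _ ≤ p * ⊤ := by gcongr
    _ ≤ p := hp.mul_top_le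

theorem IsHPrime.isHSemiprime (hp : IsHPrime k ξ p) : IsHSemiprime k ξ p := by
  obtain ⟨hpI, hpH, hpne, hprime⟩ := hp
  exact ⟨hpI, hpH, hpne, fun I hI hIs hII => or_self_iff.1 (hprime I I hI hIs hI hIs hII)⟩

protected theorem IsHSemiprime.sInf {P : Set (Submodule k A)} (hP : ∀ p ∈ P, IsHSemiprime k ξ p)
    (hne : P.Nonempty) : IsHSemiprime k ξ (sInf P) := by
  obtain ⟨p, hpP⟩ := hne
  refine ⟨.sInf fun q hq => (hP q hq).1, .sInf fun q hq => (hP q hq).2.1, ?_, ?_⟩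
  · exact ne_top_of_le_ne_top (hP p hpP).2.2.1 (sInf_le hpP)
  · exact fun I hI hIs hII => le_sInf fun q hq =>
      (hP q hq).2.2.2 I hI hIs (hII.trans (sInf_le hq))

theorem IsHPrime.hmSystem_compl (hp : IsHPrime k ξ p) : HmSystem k ξ (p : Set A)ᶜ := by
  obtain ⟨hpI, -, hpne, hprime⟩ := hp
  refine ⟨Set.nonempty_compl.2 (by simpa using hpne), fun x hx y hy => ?_⟩
  by_contra! hxy
  have hprod : idealProd k (ξ.orbitIdeal x) (ξ.orbitIdeal y) ≤ p :=
    idealProd_orbitIdeal_le hpI fun z hz => by_contra fun hzp => hxy z hzp hz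
  rcases hprime _ _ (ξ.isIdeal_orbitIdeal x) (ξ.hstable_orbitIdeal x) (ξ.isIdeal_orbitIdeal y)
    (ξ.hstable_orbitIdeal y) hprod with hxp | hyp
  · exact hx (hxp (ξ.mem_orbitIdeal_self x))
  · exact hy (hyp (ξ.mem_orbitIdeal_self y))

theorem IsHSemiprime.hnSystem_compl (hs : IsHSemiprime k ξ s) : HnSystem k ξ (s : Set A)ᶜ := by
  obtain ⟨hsI, -, hsne, hsemi⟩ := hs
  refine ⟨Set.nonempty_compl.2 (by simpa using hsne), fun x hx => ?_⟩
  by_contra! hxx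
  have hsq : idealProd k (ξ.orbitIdeal x) (ξ.orbitIdeal x) ≤ s :=
    idealProd_orbitIdeal_le hsI fun z hz => by_contra fun hzs => hxx z hzs hz
  exact hx (hsemi _ (ξ.isIdeal_orbitIdeal x) (ξ.hstable_orbitIdeal x) hsq
    (ξ.mem_orbitIdeal_self x))

theorem orbitLeftIdeal_le_of_mem_spanAxAy (hy : y ∈ spanAxAy k ξ x x) :
    ξ.orbitLeftIdeal y ≤ ξ.orbitLeftIdeal x := by
  rw [spanAxAy_eq_mul] at hy
  have hsq : ξ.orbitLeftIdeal x * ξ.orbitLeftIdeal x ≤ ξ.orbitLeftIdeal x :=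
    (mul_le_mul_left le_top _).trans (ξ.top_mul_orbitLeftIdeal_le x)
  exact PartialModuleAlgebra.orbitLeftIdeal_le (ξ.top_mul_orbitLeftIdeal_le x)
    (ξ.hstable_orbitLeftIdeal x) (hsq hy)

theorem hmSystem_range_of_mem_spanAxAy {u : ℕ → A}
    (hu : ∀ n, u (n + 1) ∈ spanAxAy k ξ (u n) (u n)) : HmSystem k ξ (Set.range u) := by
  have hanti : Antitone fun n => ξ.orbitLeftIdeal (u n) :=
    antitone_nat_of_succ_le fun n => orbitLeftIdeal_le_of_mem_spanAxAy (hu n)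
  refine ⟨Set.range_nonempty u, ?_⟩
  rintro _ ⟨i, rfl⟩ _ ⟨j, rfl⟩
  have hmem := hu (max i j)
  rw [spanAxAy_eq_mul] at hmem
  refine ⟨u (max i j + 1), Set.mem_range_self _, ?_⟩
  rw [spanAxAy_eq_mul]
  exact mul_le_mul' (hanti (le_max_left i j)) (hanti (le_max_right i j)) hmem

theorem HnSystem.exists_hmSystem_subset {N : Set A} (hN : HnSystem k ξ N) (hx : x ∈ N) :
    ∃ M ⊆ N, HmSystem k ξ M ∧ x ∈ M := by
  choose next next_mem next_mem_span using fun y : N => hN.2 y y.2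
  let u : ℕ → N := fun n => (fun y => ⟨next y, next_mem y⟩)^[n] ⟨x, hx⟩
  have hu (n : ℕ) : (u (n + 1) : A) ∈ spanAxAy k ξ (u n : A) (u n) := by
    simp only [u, Function.iterate_succ_apply']
    exact next_mem_span _
  exact ⟨Set.range fun n => (u n : A), Set.range_subset_iff.2 fun n => (u n).2,
    hmSystem_range_of_mem_spanAxAy hu, 0, rfl⟩

theorem exists_le_maximal_hstable_disjoint (hs : IsIdeal k s) (hsH : Hstable k ξ s) {M : Set A}
    (hsM : Disjoint (s : Set A) M) :
    ∃ p, s ≤ p ∧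
      Maximal (fun q => IsIdeal k q ∧ Hstable k ξ q ∧ Disjoint (q : Set A) M) p := by
  refine zorn_le_nonempty₀ {q | IsIdeal k q ∧ Hstable k ξ q ∧ Disjoint (q : Set A) M}
    (fun c hc hchain q hq => ⟨sSup c, ⟨.sSup fun I hI => (hc hI).1,
      .sSup fun I hI => (hc hI).2.1, Set.disjoint_left.2 fun z hz => ?_⟩,
      fun _ => le_sSup⟩) s ⟨hs, hsH, hsM⟩
  obtain ⟨I, hI, hzI⟩ := (Submodule.mem_sSup_of_directed ⟨q, hq⟩ hchain.directedOn).1 hz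
  exact Set.disjoint_left.1 (hc hI).2.2 hzI

theorem exists_orbitLeftIdeal_le_sup_of_maximal {M : Set A}
    (hp : Maximal (fun q => IsIdeal k q ∧ Hstable k ξ q ∧ Disjoint (q : Set A) M) p)
    (hI : IsIdeal k I) (hIs : Hstable k ξ I) (hIp : ¬ I ≤ p) :
    ∃ m ∈ M, ξ.orbitLeftIdeal m ≤ p ⊔ I := by
  obtain ⟨hpI, hpH, -⟩ := hp.prop
  have hsup : IsIdeal k (p ⊔ I) := hpI.sup hI
  have hsupH : Hstable k ξ (p ⊔ I) := hpH.sup hIs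
  have hmeet : ¬ Disjoint ((p ⊔ I : Submodule k A) : Set A) M := fun hd =>
    hIp (le_sup_right.trans (hp.le_of_ge ⟨hsup, hsupH, hd⟩ le_sup_left))
  obtain ⟨m, hm, hmM⟩ := Set.not_disjoint_iff.1 hmeet
  exact ⟨m, hmM, PartialModuleAlgebra.orbitLeftIdeal_le hsup.top_mul_le hsupH hm⟩

theorem IsIdeal.sup_mul_sup_le (hp : IsIdeal k p) (hIJ : I * J ≤ p) :
    (p ⊔ I) * (p ⊔ J) ≤ p := by
  rw [Submodule.sup_mul, Submodule.mul_sup I]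
  refine sup_le ?_ (sup_le ?_ hIJ)
  · exact (mul_le_mul_right le_top p).trans hp.mul_top_le
  · exact (mul_le_mul_left le_top p).trans hp.top_mul_le

theorem HmSystem.isHPrime_of_maximal {M : Set A} (hM : HmSystem k ξ M)
    (hp : Maximal (fun q => IsIdeal k q ∧ Hstable k ξ q ∧ Disjoint (q : Set A) M) p) :
    IsHPrime k ξ p := by
  obtain ⟨hpI, hpH, hpM⟩ := hp.prop
  refine ⟨hpI, hpH, ?_, fun I J hI hIs hJ hJs hIJ => ?_⟩
  · rintro rfl
    obtain ⟨m, hm⟩ := hM.1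
    exact Set.disjoint_left.1 hpM Submodule.mem_top hm
  · by_contra! hIJp
    obtain ⟨m, hm, hmI⟩ := exists_orbitLeftIdeal_le_sup_of_maximal hp hI hIs hIJp.1
    obtain ⟨n, hn, hnJ⟩ := exists_orbitLeftIdeal_le_sup_of_maximal hp hJ hJs hIJp.2
    obtain ⟨z, hzM, hz⟩ := hM.2 m hm n hn
    rw [spanAxAy_eq_mul] at hz
    rw [idealProd_eq_mul] at hIJ
    exact Set.disjoint_left.1 hpM (hpI.sup_mul_sup_le hIJ (mul_le_mul' hmI hnJ hz)) hzM

theorem hradical_eq_sInf (hs : IsIdeal k s) (hsH : Hstable k ξ s) :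
    Hradical k ξ s = (sInf {p | IsHPrime k ξ p ∧ s ≤ p} : Submodule k A) := by
  ext x
  rw [SetLike.mem_coe, Submodule.mem_sInf]
  refine ⟨fun hx p ⟨hp, hsp⟩ => ?_, fun hx M hM hxM => ?_⟩
  · by_contra hxp
    obtain ⟨z, hzp, hzs⟩ := hx _ hp.hmSystem_compl hxp
    exact hzp (hsp hzs)
  · by_contra hMs
    have hsM : Disjoint (s : Set A) M :=
      (Set.disjoint_iff_inter_eq_empty.2 (Set.not_nonempty_iff_eq_empty.1 hMs)).symm
    obtain ⟨p, hsp, hmax⟩ := exists_le_maximal_hstable_disjoint hs hsH hsM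
    exact Set.disjoint_left.1 hmax.prop.2.2 (hx p ⟨hM.isHPrime_of_maximal hmax, hsp⟩) hxM

theorem subset_hradical (ξ : PartialModuleAlgebra k H A) (s : Submodule k A) :
    (s : Set A) ⊆ Hradical k ξ s :=
  fun x hx _ _ hxM => ⟨x, hxM, hx⟩

theorem IsHSemiprime.hradical_eq (hs : IsHSemiprime k ξ s) : Hradical k ξ s = s := by
  refine (subset_hradical ξ s).antisymm' fun x hx => ?_
  by_contra hxs
  obtain ⟨M, hMs, hM, hxM⟩ := hs.hnSystem_compl.exists_hmSystem_subset hxs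
  obtain ⟨z, hzM, hzs⟩ := hx M hM hxM
  exact hMs hzM hzs

end

/-- For a proper `H`-stable ideal `𝔰`, the following are equivalent: `𝔰` is `H`-semiprime;
`𝔰` is an intersection of `H`-prime ideals; `𝔰 = √_H(𝔰)`. -/
theorem isHSemiprime_tfae (ξ : PartialModuleAlgebra k H A) (s : Submodule k A)
    (hp : IsIdeal k s) (hs : Hstable k ξ s) (hne : s ≠ ⊤) :
    (IsHSemiprime k ξ s ↔
      ∃ P : Set (Submodule k A), (∀ p ∈ P, IsHPrime k ξ p) ∧ (s : Set A) = ⋂ p ∈ P, (p : Set A)) ∧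
    (IsHSemiprime k ξ s ↔ (s : Set A) = Hradical k ξ s) := by
  have eq_radical_of_semiprime : IsHSemiprime k ξ s → (s : Set A) = Hradical k ξ s :=
    fun h => h.hradical_eq.symm
  have inter_of_eq_radical (h : (s : Set A) = Hradical k ξ s) :
      ∃ P : Set (Submodule k A),
        (∀ p ∈ P, IsHPrime k ξ p) ∧ (s : Set A) = ⋂ p ∈ P, (p : Set A) :=
    ⟨{p | IsHPrime k ξ p ∧ s ≤ p}, fun _ hp => hp.1,
      by rw [h, hradical_eq_sInf hp hs, Submodule.coe_sInf]⟩
  have semiprime_of_inter : (∃ P : Set (Submodule k A),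
      (∀ p ∈ P, IsHPrime k ξ p) ∧ (s : Set A) = ⋂ p ∈ P, (p : Set A)) → IsHSemiprime k ξ s := by
    rintro ⟨P, hP, hsP⟩
    obtain rfl : s = sInf P := SetLike.coe_injective (by rw [hsP, Submodule.coe_sInf])
    have hPne : P.Nonempty := Set.nonempty_iff_ne_empty.2 fun h => hne (by rw [h, sInf_empty])
    exact .sInf (fun p hpP => (hP p hpP).isHSemiprime) hPne
  exact ⟨⟨inter_of_eq_radical ∘ eq_radical_of_semiprime, semiprime_of_inter⟩,
    ⟨eq_radical_of_semiprime, semiprime_of_inter ∘ inter_of_eq_radical⟩⟩
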